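/- arXiv:1207.5295 — 2 statements merged into one kernel-verified Lean document; each statement's English description precedes it below -/
import Mathlib

section
/- Let f : X → G(Z,C) be convex, x₀ ∈ dom f, z* ∈ C⁻ \ {0}, and define the sublinear map F(x) = f'_{z*}(x₀, x) and its adjoint process F^◇(u*) = {x* ∈ X* : x*(x) ≤ u*(z) for all x ∈ X and all z ∈ F(x)} for u* ∈ Z*. Then: F^◇(u*) = ∅ if u* ∉ {−s z* : s ≥ 0}; F^◇(0) = {x* ∈ X* : x*(y) ≤ 0 for all y ∈ ⋃_{t>0} t·(dom f − x₀)} (the negative polar cone of cone(dom f − x₀)); and F^◇(−s z*) = s·∂_{z*} f(x₀) for every s > 0. -/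
open Set Topology Pointwise

noncomputable section

variable {X Z : Type*}

/-- The family `G(Z,C)` of subsets `A` with `A = cl co (A + C)`. -/
def Gset [AddCommGroup Z] [Module ℝ Z] [TopologicalSpace Z] (C : Set Z) : Set (Set Z) :=
  {A | A = closure (convexHull ℝ (A + C))}

/-- `A ⊕ B = cl (A + B)` (Minkowski sum, with `A + ∅ = ∅`). -/
def oplus [AddCommGroup Z] [TopologicalSpace Z] (A B : Set Z) : Set Z :=
  closure (A + B)

/-- The homogeneous closed half-space `H(z*) = {z : z*(z) ≤ 0}`. -/
def Hset [TopologicalSpace Z] [AddCommGroup Z] [Module ℝ Z] (zs : Z →L[ℝ] ℝ) : Set Z :=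
  {z | zs z ≤ 0}

/-- `A −_{z*} B = {z : B + z ⊆ A ⊕ H(z*)}`. -/
def resid [TopologicalSpace Z] [AddCommGroup Z] [Module ℝ Z]
    (zs : Z →L[ℝ] ℝ) (A B : Set Z) : Set Z :=
  {z | ∀ b ∈ B, b + z ∈ oplus A (Hset zs)}

/-- Convexity of a set-valued function: `f(t x₁ + (1-t) x₂) ⊇ t f(x₁) ⊕ (1-t) f(x₂)`. -/
def ConvexSV [AddCommGroup X] [Module ℝ X] [TopologicalSpace Z] [AddCommGroup Z] [Module ℝ Z]
    (f : X → Set Z) : Prop :=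
  ∀ x₁ x₂ : X, ∀ t : ℝ, 0 < t → t < 1 →
    oplus (t • f x₁) ((1 - t) • f x₂) ⊆ f (t • x₁ + (1 - t) • x₂)

/-- Directional derivative `f'_{z*}(x₀, x) = ⋂_{s>0} cl ⋃_{0<t<s} (1/t)(f(x₀+tx) −_{z*} f(x₀))`. -/
def dirDer [AddCommGroup X] [Module ℝ X] [TopologicalSpace Z] [AddCommGroup Z] [Module ℝ Z]
    (zs : Z →L[ℝ] ℝ) (f : X → Set Z) (x₀ x : X) : Set Z :=
  ⋂ s ∈ Ioi (0:ℝ), closure (⋃ t ∈ Ioo (0:ℝ) s, (1 / t) • resid zs (f (x₀ + t • x)) (f x₀))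

/-- `S_{(x*,z*)}(x) = {z : x*(x) + z*(z) ≤ 0}`. -/
def Sfun [TopologicalSpace X] [AddCommGroup X] [Module ℝ X]
    [TopologicalSpace Z] [AddCommGroup Z] [Module ℝ Z]
    (xs : X →L[ℝ] ℝ) (zs : Z →L[ℝ] ℝ) (x : X) : Set Z :=
  {z | xs x + zs z ≤ 0}

/-- The `z*`-subdifferential of `f` at `x₀`. -/
def subdiff [TopologicalSpace X] [AddCommGroup X] [Module ℝ X]
    [TopologicalSpace Z] [AddCommGroup Z] [Module ℝ Z]
    (zs : Z →L[ℝ] ℝ) (f : X → Set Z) (x₀ : X) : Set (X →L[ℝ] ℝ) :=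
  {xs | ∀ x : X, dirDer zs f x₀ x ⊆ Sfun xs zs x}

/-- Scalarization `φ_{f,z*}(x) = inf{−z*(z) : z ∈ f(x)}` taking values in `EReal`. -/
def scalFn [TopologicalSpace Z] [AddCommGroup Z] [Module ℝ Z]
    (zs : Z →L[ℝ] ℝ) (f : X → Set Z) (x : X) : EReal :=
  ⨅ z ∈ f x, ((-(zs z) : ℝ) : EReal)

/-- Inf-residuation on `EReal`: `r −• s = inf {t ∈ ℝ : r ≤ s + t}`. -/
def eresid (r s : EReal) : EReal :=
  sInf {t : EReal | ∃ t' : ℝ, t = (t' : EReal) ∧ r ≤ s + (t' : EReal)}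

/-- Scalar directional derivative `φ'_{f,z*}(x₀,x) = inf_{t>0} (1/t)(φ(x₀+tx) −• φ(x₀))`. -/
def scalDer [AddCommGroup X] [Module ℝ X] [TopologicalSpace Z] [AddCommGroup Z] [Module ℝ Z]
    (zs : Z →L[ℝ] ℝ) (f : X → Set Z) (x₀ x : X) : EReal :=
  ⨅ t ∈ Ioi (0:ℝ), (((1 / t : ℝ) : EReal) * eresid (scalFn zs f (x₀ + t • x)) (scalFn zs f x₀))

/-- Inf-translation `f̂(x; M) = cl co ⋃_{m ∈ M} f(m + x)`. -/
def infTrans [AddCommGroup X] [TopologicalSpace Z] [AddCommGroup Z] [Module ℝ Z]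
    (f : X → Set Z) (M : Set X) (x : X) : Set Z :=
  closure (convexHull ℝ (⋃ m ∈ M, f (m + x)))

end

theorem dirDer_nonempty_aux {Z : Type*} [AddCommGroup Z] [Module ℝ Z] [TopologicalSpace Z]
    {X : Type*} [AddCommGroup X] [Module ℝ X]
    (zs : Z →L[ℝ] ℝ) (hzs0 : zs ≠ 0) (f : X → Set Z) (hf : ConvexSV f)
    (x₀ x : X) (hx : (f x).Nonempty) (τ : ℝ) (hτ : 0 < τ) :
    (dirDer zs f x₀ (τ • (x - x₀))).Nonempty := by
  obtain ⟨a, ha⟩ := hx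
  obtain ⟨w, hw⟩ : ∃ w, zs w ≠ 0 := by
    by_contra h
    push Not at h
    exact hzs0 (ContinuousLinearMap.ext h)
  have key : ∃ z0 : Z, ∀ t : ℝ, 0 < t → t * τ < 1 → ∀ b ∈ f x₀, ∃ b' ∈ f x₀,
      zs b + t * zs z0 ≤ (t * τ) * zs a + (1 - t * τ) * zs b' := by
    by_cases hb : BddAbove (zs '' f x₀)
    · obtain ⟨M, hM⟩ := hb
      refine ⟨(τ * (zs a - M) / zs w) • w, fun t ht _ b hb => ⟨b, hb, ?_⟩⟩
      have h1 : zs b ≤ M := hM ⟨b, hb, rfl⟩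
      have h2 : zs ((τ * (zs a - M) / zs w) • w) = τ * (zs a - M) := by
        simp only [map_smul, smul_eq_mul]
        field_simp
      rw [h2]
      have := mul_le_mul_of_nonneg_left h1 (mul_pos ht hτ).le
      nlinarith
    · refine ⟨0, fun t ht h1 b _ => ?_⟩
      rw [not_bddAbove_iff] at hb
      obtain ⟨_, ⟨b', hb', rfl⟩, h⟩ := hb ((zs b - t * τ * zs a) / (1 - t * τ))
      refine ⟨b', hb', ?_⟩
      rw [div_lt_iff₀ (by linarith)] at h
      simp only [map_zero]
      linarith
  obtain ⟨z0, hz0⟩ := key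
  refine ⟨z0, ?_⟩
  simp only [dirDer, mem_iInter]
  intro s hs
  apply subset_closure
  have hs : 0 < s := hs
  set t : ℝ := min s (1 / τ) / 2 with htdef
  have hm : 0 < min s (1 / τ) := lt_min hs (by positivity)
  have ht : 0 < t := by positivity
  have hts : t < s := by
    have := min_le_left s (1 / τ)
    linarith
  have htτ : t * τ < 1 := by
    have := min_le_right s (1 / τ)
    rw [← lt_div_iff₀ hτ]
    linarith
  simp only [mem_iUnion]
  refine ⟨t, ⟨ht, hts⟩, ?_⟩
  refine ⟨t • z0, ?_, ?_⟩
  · intro b hb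
    obtain ⟨b', hb', h⟩ := hz0 t ht htτ b hb
    apply subset_closure
    refine ⟨(t * τ) • a + (1 - t * τ) • b', ?_,
      b + t • z0 - ((t * τ) • a + (1 - t * τ) • b'), ?_, by simp⟩
    · have e : x₀ + t • τ • (x - x₀) = (t * τ) • x + (1 - t * τ) • x₀ := by module
      rw [e]
      exact hf x x₀ (t * τ) (mul_pos ht hτ) htτ (subset_closure
        ⟨_, smul_mem_smul_set ha, _, smul_mem_smul_set hb', rfl⟩)
    · simp only [Hset, mem_setOf_eq, map_sub, map_add, map_smul, smul_eq_mul]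
      linarith
  · simp only [smul_smul]
    rw [one_div, inv_mul_cancel₀ ht.ne', one_smul]

theorem dirDer_zero_aux {Z : Type*} [AddCommGroup Z] [Module ℝ Z] [TopologicalSpace Z]
    {X : Type*} [AddCommGroup X] [Module ℝ X]
    (zs : Z →L[ℝ] ℝ) (f : X → Set Z) (x₀ : X) (z : Z) (hz : zs z ≤ 0) :
    z ∈ dirDer zs f x₀ 0 := by
  simp only [dirDer, mem_iInter]
  intro s hs
  apply subset_closure
  have hs : 0 < s := hs
  simp only [mem_iUnion]
  refine ⟨s / 2, ⟨by linarith, by linarith⟩, (s / 2) • z, ?_, ?_⟩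
  · intro b hb
    apply subset_closure
    refine ⟨b, by simpa using hb, _, ?_, rfl⟩
    simp only [Hset, mem_setOf_eq, map_smul, smul_eq_mul]
    nlinarith
  · simp only [smul_smul]
    rw [one_div, inv_mul_cancel₀ (by positivity), one_smul]

theorem stmt17 {Z : Type*} [AddCommGroup Z] [Module ℝ Z] [TopologicalSpace Z]
    [IsTopologicalAddGroup Z] [ContinuousSMul ℝ Z] [LocallyConvexSpace ℝ Z]
    {X : Type*} [AddCommGroup X] [Module ℝ X] [TopologicalSpace X]
    [IsTopologicalAddGroup X] [ContinuousSMul ℝ X] [LocallyConvexSpace ℝ X]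
    (C : Set Z) (hCconv : Convex ℝ C) (hC0 : (0:Z) ∈ C)
    (hCcone : ∀ t : ℝ, 0 < t → t • C ⊆ C) (hclC : closure C ≠ Set.univ)
    (zs : Z →L[ℝ] ℝ) (hzs : ∀ z ∈ C, zs z ≤ 0) (hzs0 : zs ≠ 0)
    (f : X → Set Z) (hf : ConvexSV f) (hfG : ∀ x : X, f x ∈ Gset C)
    (x₀ : X) (hx₀ : f x₀ ≠ ∅) :
    (∀ us : Z →L[ℝ] ℝ, (∀ s : ℝ, 0 ≤ s → us ≠ -(s • zs)) →
      {xs : X →L[ℝ] ℝ | ∀ x : X, ∀ z ∈ dirDer zs f x₀ x, xs x ≤ us z} = ∅) ∧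
    ({xs : X →L[ℝ] ℝ | ∀ x : X, ∀ z ∈ dirDer zs f x₀ x, xs x ≤ (0 : Z →L[ℝ] ℝ) z} =
      {xs : X →L[ℝ] ℝ |
        ∀ y ∈ ⋃ t ∈ Set.Ioi (0:ℝ), t • ({x : X | f x ≠ ∅} - {x₀}), xs y ≤ 0}) ∧
    (∀ s : ℝ, 0 < s →
      {xs : X →L[ℝ] ℝ | ∀ x : X, ∀ z ∈ dirDer zs f x₀ x, xs x ≤ (-(s • zs)) z} =
        s • subdiff zs f x₀) := by
  refine ⟨?_, ?_, ?_⟩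
  · intro us hus
    rw [eq_empty_iff_forall_notMem]
    intro xs hxs
    have h : ∀ z, zs z ≤ 0 → 0 ≤ us z := fun z hz => by
      simpa using hxs 0 z (dirDer_zero_aux zs f x₀ z hz)
    obtain ⟨w, hw⟩ : ∃ w, zs w < 0 := by
      by_contra hc
      push Not at hc
      refine hzs0 (ContinuousLinearMap.ext fun z => ?_)
      have h1 := hc z
      have h2 := hc (-z)
      simp only [map_neg] at h2
      simp only [ContinuousLinearMap.zero_apply]
      linarith
    have hw0 : 0 ≤ us w := h w hw.le
    refine hus (us w / (-zs w)) (div_nonneg hw0 (by linarith)) ?_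
    ext z
    have h1 := h (z - (zs z / zs w) • w) (by
      simp [div_mul_cancel₀ _ hw.ne])
    have h2 := h (-(z - (zs z / zs w) • w)) (by
      simp [div_mul_cancel₀ _ hw.ne])
    simp only [map_neg, map_sub, map_smul, smul_eq_mul] at h1 h2
    have h3 : us z = zs z / zs w * us w := by linarith
    rw [h3]
    simp only [ContinuousLinearMap.neg_apply, ContinuousLinearMap.smul_apply, smul_eq_mul]
    have := hw.ne
    field_simp
  · ext xs
    simp only [mem_setOf_eq, ContinuousLinearMap.zero_apply]
    constructor
    · intro h y hy
      simp only [mem_iUnion] at hy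
      obtain ⟨t, ht, y', ⟨x, hx, x', hx', rfl⟩, rfl⟩ := hy
      rw [mem_singleton_iff] at hx'
      subst hx'
      obtain ⟨z, hz⟩ := dirDer_nonempty_aux zs hzs0 f hf x' x
        (nonempty_iff_ne_empty.mpr hx) t ht
      exact h _ z hz
    · intro h x z hz
      simp only [dirDer, mem_iInter] at hz
      obtain ⟨z', hz'⟩ := closure_nonempty_iff.mp ⟨z, hz 1 (mem_Ioi.mpr one_pos)⟩
      simp only [mem_iUnion] at hz'
      obtain ⟨t, ht, r, hr, -⟩ := hz'
      obtain ⟨b, hb⟩ := nonempty_iff_ne_empty.mpr hx₀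
      obtain ⟨_, a, ha, -⟩ := closure_nonempty_iff.mp ⟨_, hr b hb⟩
      have ht0 : 0 < t := ht.1
      apply h
      simp only [mem_iUnion]
      refine ⟨t⁻¹, inv_pos.mpr ht0, t • x,
        ⟨x₀ + t • x, (nonempty_iff_ne_empty.mp ⟨a, ha⟩), x₀, rfl, by simp⟩, ?_⟩
      simp only [smul_smul]
      rw [inv_mul_cancel₀ ht0.ne', one_smul]
  · intro s hs
    ext xs
    rw [mem_smul_set_iff_inv_smul_mem₀ hs.ne']
    simp only [subdiff, Sfun, mem_setOf_eq, subset_def]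
    refine forall_congr' fun x => forall_congr' fun z => imp_congr_right fun _ => ?_
    simp only [ContinuousLinearMap.neg_apply, ContinuousLinearMap.smul_apply, smul_eq_mul]
    have e : s⁻¹ * xs x + zs z = s⁻¹ * (xs x + s * zs z) := by field_simp
    rw [e, mul_nonpos_iff_pos_imp_nonpos]
    have : 0 < s⁻¹ := inv_pos.mpr hs
    constructor
    · intro h
      exact ⟨fun _ => by linarith, fun _ => this.le⟩
    · rintro ⟨h, -⟩
      linarith [h this]
end

section
/- Let f : X → G(Z,C) be convex, z* ∈ C⁻ \ {0} and x₀ ∈ dom f. The following are equivalent: (a) x₀ is a z*-solution, i.e., f(x₀) ⊕ H(z*) = (cl co ⋃_{x ∈ X} f(x)) ⊕ H(z*); (b) dom f = ∅, or f(x₀) ⊕ H(z*) = Z, or H(z*) ⊇ f'_{z*}(x₀, x) for all x ∈ X; (c) dom f = ∅, or f(x₀) ⊕ H(z*) = Z, or 0 ∈ ∂_{z*} f(x₀). -/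
open Set Topology Pointwise

theorem mem_oplus_iff {Z : Type*} [AddCommGroup Z] [Module ℝ Z] [TopologicalSpace Z]
    [IsTopologicalAddGroup Z] [ContinuousSMul ℝ Z]
    (zs : Z →L[ℝ] ℝ) (hzs0 : zs ≠ 0) (A : Set Z) (z : Z) :
    z ∈ oplus A (Hset zs) ↔ ∀ ε : ℝ, 0 < ε → ∃ a ∈ A, zs z < zs a + ε := by
  constructor
  · intro hz ε hε
    have hopen : IsOpen {w : Z | zs z - ε < zs w} := isOpen_lt continuous_const zs.continuous
    obtain ⟨w, hw, hwA⟩ := mem_closure_iff.1 hz _ hopen (by simp [hε])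
    obtain ⟨a, ha, h, hh, rfl⟩ := Set.mem_add.1 hwA
    refine ⟨a, ha, ?_⟩
    have h1 : zs h ≤ 0 := hh
    have h2 : zs z - ε < zs (a + h) := hw
    rw [map_add] at h2
    linarith
  · intro h
    obtain ⟨e, he⟩ : ∃ e, zs e = 1 := by
      obtain ⟨v, hv⟩ : ∃ v, zs v ≠ 0 := by
        by_contra hcon
        push Not at hcon
        exact hzs0 (ContinuousLinearMap.ext hcon)
      exact ⟨(zs v)⁻¹ • v, by simp [hv]⟩
    have hc : Filter.Tendsto (fun ε : ℝ => z - ε • e) (𝓝[>] 0) (𝓝 z) := by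
      have : Continuous (fun ε : ℝ => z - ε • e) := by fun_prop
      have h2 := this.tendsto 0
      simp only [zero_smul, sub_zero] at h2
      exact h2.mono_left nhdsWithin_le_nhds
    refine mem_closure_of_tendsto hc ?_
    filter_upwards [self_mem_nhdsWithin] with ε hε
    obtain ⟨a, ha, hlt⟩ := h ε hε
    refine Set.mem_add.2 ⟨a, ha, z - ε • e - a, ?_, by abel⟩
    change zs (z - ε • e - a) ≤ 0
    simp only [map_sub, map_smul, he, smul_eq_mul]
    linarith

theorem stmt18 {Z : Type*} [AddCommGroup Z] [Module ℝ Z] [TopologicalSpace Z]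
    [IsTopologicalAddGroup Z] [ContinuousSMul ℝ Z] [LocallyConvexSpace ℝ Z]
    {X : Type*} [AddCommGroup X] [Module ℝ X] [TopologicalSpace X]
    [IsTopologicalAddGroup X] [ContinuousSMul ℝ X] [LocallyConvexSpace ℝ X]
    (C : Set Z) (hCconv : Convex ℝ C) (hC0 : (0:Z) ∈ C)
    (hCcone : ∀ t : ℝ, 0 < t → t • C ⊆ C) (hclC : closure C ≠ Set.univ)
    (zs : Z →L[ℝ] ℝ) (hzs : ∀ z ∈ C, zs z ≤ 0) (hzs0 : zs ≠ 0)
    (f : X → Set Z) (hf : ConvexSV f) (hfG : ∀ x : X, f x ∈ Gset C)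
    (x₀ : X) (hx₀ : f x₀ ≠ ∅) :
    ((oplus (f x₀) (Hset zs) =
        oplus (closure (convexHull ℝ (⋃ x : X, f x))) (Hset zs)) ↔
      ((∀ x : X, f x = ∅) ∨ oplus (f x₀) (Hset zs) = Set.univ ∨
        ∀ x : X, dirDer zs f x₀ x ⊆ Hset zs)) ∧
    ((oplus (f x₀) (Hset zs) =
        oplus (closure (convexHull ℝ (⋃ x : X, f x))) (Hset zs)) ↔
      ((∀ x : X, f x = ∅) ∨ oplus (f x₀) (Hset zs) = Set.univ ∨
        (0 : X →L[ℝ] ℝ) ∈ subdiff zs f x₀)) := by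
  have hne : (f x₀).Nonempty := Set.nonempty_iff_ne_empty.2 hx₀
  have hsub : ∀ x : X, dirDer zs f x₀ x ⊆ Sfun 0 zs x ↔ dirDer zs f x₀ x ⊆ Hset zs := by
    intro x
    have : Sfun (0 : X →L[ℝ] ℝ) zs x = Hset zs := by
      ext z; simp [Sfun, Hset]
    rw [this]
  have hmem := mem_oplus_iff zs hzs0
  have hle : oplus (f x₀) (Hset zs) ⊆
      oplus (closure (convexHull ℝ (⋃ x : X, f x))) (Hset zs) := by
    apply closure_mono
    apply Set.add_subset_add_right
    exact ((Set.subset_iUnion f x₀).trans (subset_convexHull ℝ _)).trans subset_closure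
  have key : (oplus (f x₀) (Hset zs) =
        oplus (closure (convexHull ℝ (⋃ x : X, f x))) (Hset zs)) ↔
      ((∀ x : X, f x = ∅) ∨ oplus (f x₀) (Hset zs) = Set.univ ∨
        ∀ x : X, dirDer zs f x₀ x ⊆ Hset zs) := by
    constructor
    · intro ha
      right
      by_cases hu : oplus (f x₀) (Hset zs) = Set.univ
      · exact Or.inl hu
      right
      obtain ⟨w, hw⟩ := (Set.ne_univ_iff_exists_notMem _).1 hu
      rw [hmem] at hw
      push Not at hw
      obtain ⟨ε₀, hε₀, hw⟩ := hw
      have hbdd : BddAbove (zs '' f x₀) := by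
        refine ⟨zs w, ?_⟩
        rintro _ ⟨a, haa, rfl⟩
        linarith [hw a haa]
      have hP : ∀ z, z ∈ oplus (f x₀) (Hset zs) → zs z ≤ sSup (zs '' f x₀) := by
        intro z hz
        rw [hmem] at hz
        refine le_of_forall_pos_le_add fun ε hε => ?_
        obtain ⟨a, haa, hlt⟩ := hz ε hε
        have := le_csSup hbdd (Set.mem_image_of_mem zs haa)
        linarith
      intro x z hz
      have hz1 := Set.mem_iInter₂.1 hz 1 (Set.mem_Ioi.2 one_pos)
      have hcl : IsClosed (Hset zs) := isClosed_le zs.continuous continuous_const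
      refine closure_minimal ?_ hcl hz1
      refine Set.iUnion₂_subset fun t ht => ?_
      rintro _ ⟨r, hr, rfl⟩
      have hr0 : zs r ≤ 0 := by
        have : sSup (zs '' f x₀) ≤ sSup (zs '' f x₀) - zs r := by
          apply csSup_le (hne.image _)
          rintro _ ⟨b, hb, rfl⟩
          have h1 := hr b hb
          have h2 : b + r ∈ oplus (f x₀) (Hset zs) := by
            rw [ha]
            refine closure_mono (Set.add_subset_add_right ?_) h1
            exact ((Set.subset_iUnion f _).trans (subset_convexHull ℝ _)).trans subset_closure
          have h3 := hP _ h2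
          rw [map_add] at h3
          linarith
        linarith
      change zs ((1 / t) • r) ≤ 0
      rw [map_smul, smul_eq_mul]
      exact mul_nonpos_of_nonneg_of_nonpos (by have := ht.1; positivity) hr0
    · rintro (h | h | h)
      · exact absurd (h x₀) hx₀
      · apply subset_antisymm hle
        rw [h]
        exact Set.subset_univ _
      · have hall : ∀ x, f x ⊆ oplus (f x₀) (Hset zs) := by
          intro x y hy
          by_contra hcon
          rw [hmem] at hcon
          push Not at hcon
          obtain ⟨ε, hε, hcon⟩ := hcon
          obtain ⟨z, hz⟩ : ∃ z, zs z = ε := by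
            obtain ⟨v, hv⟩ : ∃ v, zs v ≠ 0 := by
              by_contra hcon
              push Not at hcon
              exact hzs0 (ContinuousLinearMap.ext hcon)
            exact ⟨(ε * (zs v)⁻¹) • v, by simp [hv]⟩
          have hzd : z ∈ dirDer zs f x₀ (x - x₀) := by
            refine Set.mem_iInter₂.2 fun s hs => subset_closure ?_
            have hs' : (0:ℝ) < s := hs
            obtain ⟨t, ht0, ht⟩ := exists_between (lt_min hs' one_pos)
            have hts := ht.trans_le (min_le_left _ _)
            have ht1 := ht.trans_le (min_le_right _ _)
            refine Set.mem_iUnion₂.2 ⟨t, ⟨ht0, hts⟩, ?_⟩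
            refine ⟨t • z, ?_, ?_⟩
            · intro b hb
              rw [hmem]
              intro δ hδ
              refine ⟨t • y + (1 - t) • b, ?_, ?_⟩
              · have h1 := hf x x₀ t ht0 ht1 (subset_closure
                  (Set.add_mem_add (Set.smul_mem_smul_set hy) (Set.smul_mem_smul_set hb)))
                have h2 : x₀ + t • (x - x₀) = t • x + (1 - t) • x₀ := by module
                rw [h2]
                exact h1
              · have h1 := hcon b hb
                simp only [map_add, map_smul, smul_eq_mul, hz]
                nlinarith
            · change (1 / t) • t • z = z
              rw [smul_smul, one_div_mul_cancel ht0.ne', one_smul]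
          have : zs z ≤ 0 := h _ hzd
          linarith
        have hfc : Convex ℝ (f x₀) := by
          have h1 : f x₀ = closure (convexHull ℝ (f x₀ + C)) := hfG x₀
          rw [h1]
          exact (convex_convexHull ℝ _).closure
        have hHc : Convex ℝ (Hset zs) := by
          exact convex_halfSpace_le zs.toLinearMap.isLinear 0
        have hoc : Convex ℝ (oplus (f x₀) (Hset zs)) := (hfc.add hHc).closure
        have hcl : closure (convexHull ℝ (⋃ x : X, f x)) ⊆ oplus (f x₀) (Hset zs) :=
          closure_minimal (convexHull_min (Set.iUnion_subset hall) hoc) isClosed_closure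
        apply subset_antisymm hle
        intro z hz
        rw [hmem] at hz ⊢
        intro ε hε
        obtain ⟨b, hb, h1⟩ := hz (ε / 2) (by positivity)
        obtain ⟨a, haa, h2⟩ := (hmem _ _).1 (hcl hb) (ε / 2) (by positivity)
        exact ⟨a, haa, by linarith⟩
  refine ⟨key, key.trans ?_⟩
  refine or_congr Iff.rfl (or_congr Iff.rfl ?_)
  exact forall_congr' fun x => (hsub x).symm
end
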